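/- Let A = kQ/I be a gentle algebra. Then the global dimension of A is infinite if and only if the bound quiver (Q, I) contains at least one oriented cycle with full relations, i.e. an oriented cycle α₁α₂⋯α_ℓ with t(α_ℓ) = s(α₁) such that α_i α_{i+1} ∈ I for all i (indices modulo ℓ). -/

import Mathlib

open MulOpposite DirectSum

set_option autoImplicit false

/-- The combinatorial data of a finite quiver together with a set of
length-two relations (`rel a b` means that the length-two path `a·b` lies in
the admissible ideal `I`). -/
structure GentleData : Type 1 where
  V : Type
  A : Type
  [fintypeV : Fintype V]
  [fintypeA : Fintype A]
  [decEqV : DecidableEq V]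
  [decEqA : DecidableEq A]
  src : A → V
  tgt : A → V
  rel : A → A → Prop

attribute [instance] GentleData.fintypeV GentleData.fintypeA GentleData.decEqV GentleData.decEqA

/-- The gentleness conditions on a bound quiver `(Q, I)`:
relations are composable length-two paths; at most two arrows start
(resp. end) at every vertex; for every arrow `β` there is at most one arrow `α`
with `αβ ∉ I` and at most one with `αβ ∈ I`, and dually; and there is a bound
on the length of paths avoiding relations (admissibility). -/
def IsGentle (Q : GentleData) : Prop :=
  (∀ a b, Q.rel a b → Q.tgt a = Q.src b) ∧
  (∀ v : Q.V, Set.ncard {a : Q.A | Q.src a = v} ≤ 2) ∧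
  (∀ v : Q.V, Set.ncard {a : Q.A | Q.tgt a = v} ≤ 2) ∧
  (∀ b : Q.A, Set.ncard {a : Q.A | Q.tgt a = Q.src b ∧ ¬ Q.rel a b} ≤ 1) ∧
  (∀ b : Q.A, Set.ncard {a : Q.A | Q.tgt a = Q.src b ∧ Q.rel a b} ≤ 1) ∧
  (∀ a : Q.A, Set.ncard {b : Q.A | Q.src b = Q.tgt a ∧ ¬ Q.rel a b} ≤ 1) ∧
  (∀ a : Q.A, Set.ncard {b : Q.A | Q.src b = Q.tgt a ∧ Q.rel a b} ≤ 1) ∧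
  (∃ N : ℕ, ∀ p : ℕ → Q.A, ¬ ∀ i, i < N → (Q.tgt (p i) = Q.src (p (i+1)) ∧ ¬ Q.rel (p i) (p (i+1))))

/-- Generators of the path algebra: one generator for each vertex (the
corresponding trivial path) and one for each arrow. -/
inductive GenSym (Q : GentleData) : Type
  | vertex : Q.V → GenSym Q
  | arrow : Q.A → GenSym Q

/-- The defining relations of the algebra `kQ/I`: the trivial paths are
orthogonal idempotents summing to `1`, arrows are compatible with the trivial
paths at their source and target, and the chosen length-two paths vanish. -/
inductive GentleRel (k : Type) [Field k] (Q : GentleData) :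
    FreeAlgebra k (GenSym Q) → FreeAlgebra k (GenSym Q) → Prop
  | idem (v : Q.V) : GentleRel k Q
      (FreeAlgebra.ι k (GenSym.vertex v) * FreeAlgebra.ι k (GenSym.vertex v))
      (FreeAlgebra.ι k (GenSym.vertex v))
  | orth (v w : Q.V) (h : v ≠ w) : GentleRel k Q
      (FreeAlgebra.ι k (GenSym.vertex v) * FreeAlgebra.ι k (GenSym.vertex w)) 0
  | sum_idem : GentleRel k Q (∑ v : Q.V, FreeAlgebra.ι k (GenSym.vertex v)) 1
  | src_mul (a : Q.A) : GentleRel k Q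
      (FreeAlgebra.ι k (GenSym.vertex (Q.src a)) * FreeAlgebra.ι k (GenSym.arrow a))
      (FreeAlgebra.ι k (GenSym.arrow a))
  | mul_tgt (a : Q.A) : GentleRel k Q
      (FreeAlgebra.ι k (GenSym.arrow a) * FreeAlgebra.ι k (GenSym.vertex (Q.tgt a)))
      (FreeAlgebra.ι k (GenSym.arrow a))
  | relation (a b : Q.A) (h : Q.rel a b) : GentleRel k Q
      (FreeAlgebra.ι k (GenSym.arrow a) * FreeAlgebra.ι k (GenSym.arrow b)) 0

/-- The algebra `A = kQ/I` presented by the bound quiver `Q`. -/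
abbrev GentleAlgebra (k : Type) [Field k] (Q : GentleData) : Type :=
  RingQuot (GentleRel k Q)

/-- The image in `kQ/I` of a generator. -/
noncomputable def ofGen (k : Type) [Field k] (Q : GentleData) (x : GenSym Q) :
    GentleAlgebra k Q :=
  RingQuot.mkAlgHom k (GentleRel k Q) (FreeAlgebra.ι k x)

/-- The idempotent `e_v ∈ kQ/I` of a vertex `v`. -/
noncomputable def idemOf (k : Type) [Field k] (Q : GentleData) (v : Q.V) :
    GentleAlgebra k Q :=
  ofGen k Q (GenSym.vertex v)

/-- The element of `kQ/I` given by an arrow `a`. -/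
noncomputable def arrOf (k : Type) [Field k] (Q : GentleData) (a : Q.A) :
    GentleAlgebra k Q :=
  ofGen k Q (GenSym.arrow a)

/-- The indecomposable projective right module `e_v A`, as a right submodule
(i.e. `Aᵐᵒᵖ`-submodule) of `A`. -/
noncomputable def vertexModule (k : Type) [Field k] (Q : GentleData) (v : Q.V) :
    Submodule (GentleAlgebra k Q)ᵐᵒᵖ (GentleAlgebra k Q) :=
  Submodule.span (GentleAlgebra k Q)ᵐᵒᵖ {idemOf k Q v}

/-- The right module `αA` generated by an arrow `α`, as a right submodule of `A`. -/
noncomputable def arrowModule (k : Type) [Field k] (Q : GentleData) (a : Q.A) :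
    Submodule (GentleAlgebra k Q)ᵐᵒᵖ (GentleAlgebra k Q) :=
  Submodule.span (GentleAlgebra k Q)ᵐᵒᵖ {arrOf k Q a}

/-- An oriented cycle `c` of length `ℓ` with full relations:
`t(cᵢ) = s(cᵢ₊₁)` and `cᵢ cᵢ₊₁ ∈ I` for all `i` (indices modulo `ℓ`). -/
def IsOCFCycle (Q : GentleData) {ℓ : ℕ} (c : ZMod ℓ → Q.A) : Prop :=
  ∀ i : ZMod ℓ, Q.tgt (c i) = Q.src (c (i + 1)) ∧ Q.rel (c i) (c (i + 1))

/-- The arrow `a` lies on some oriented cycle with full relations. -/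
def OnOCFCycle (Q : GentleData) (a : Q.A) : Prop :=
  ∃ ℓ : ℕ, 1 ≤ ℓ ∧ ∃ c : ZMod ℓ → Q.A, IsOCFCycle Q c ∧ ∃ i : ZMod ℓ, c i = a

/-- The whole quiver `(Q, I)` is an oriented cycle of some length `ℓ ≥ 1` with
full relations. -/
def QuiverIsOCF (Q : GentleData) : Prop :=
  ∃ ℓ : ℕ, 1 ≤ ℓ ∧ ∃ (e : Q.V ≃ ZMod ℓ) (f : Q.A ≃ ZMod ℓ),
    (∀ a, e (Q.src a) = f a) ∧ (∀ a, e (Q.tgt a) = f a + 1) ∧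
    (∀ a b, Q.rel a b ↔ f b = f a + 1)

/-- The quiver `(Q, I)` is a single point: exactly one vertex and no arrows. -/
def QuiverIsPoint (Q : GentleData) : Prop :=
  (∃ v : Q.V, ∀ w : Q.V, w = v) ∧ IsEmpty Q.A

/-- `v` is a common vertex of two distinct oriented cycles with full relations. -/
def TwoCyclesAt (Q : GentleData) (v : Q.V) : Prop :=
  ∃ (ℓ ℓ' : ℕ), 1 ≤ ℓ ∧ 1 ≤ ℓ' ∧ ∃ (c : ZMod ℓ → Q.A) (c' : ZMod ℓ' → Q.A),
    IsOCFCycle Q c ∧ IsOCFCycle Q c' ∧ Function.Injective c ∧ Function.Injective c' ∧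
    (∃ i, Q.tgt (c i) = v) ∧ (∃ j, Q.tgt (c' j) = v) ∧ Set.range c ≠ Set.range c'

/-- The set of vertices lying on an oriented cycle with full relations. -/
def ocfVertexSet (Q : GentleData) : Set Q.V :=
  {v | ∃ a : Q.A, OnOCFCycle Q a ∧ Q.tgt a = v}

/-- Oriented cycles with full relations, identified up to cyclic rotation. -/
def ocfCycleSetoid (Q : GentleData) (ℓ : ℕ) :
    Setoid {c : ZMod ℓ → Q.A // IsOCFCycle Q c ∧ Function.Injective c} where
  r c c' := ∃ t : ZMod ℓ, ∀ i, c'.1 i = c.1 (i + t)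
  iseqv := by
    refine ⟨fun c => ⟨0, fun i => by rw [add_zero]⟩, ?_, ?_⟩
    · rintro c c' ⟨t, ht⟩
      exact ⟨-t, fun i => by rw [ht (i + -t), neg_add_cancel_right]⟩
    · rintro a b c ⟨t, ht⟩ ⟨s, hs⟩
      exact ⟨s + t, fun i => by rw [hs i, ht (i + s), add_assoc]⟩

/-- `AGzero Q ℓ` is the value `φ_A(0, ℓ)` of the AG-invariant: the number of
oriented cycles of length `ℓ` with full relations, counted up to rotation. -/
noncomputable def AGzero (Q : GentleData) (ℓ : ℕ) : ℕ :=
  Nat.card (Quotient (ocfCycleSetoid Q ℓ))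

/-- A (nontrivial) forbidden path with arrows `p 0, …, p (m-1)`:
all consecutive length-two subpaths lie in `I`. -/
def IsForbiddenPath (Q : GentleData) (m : ℕ) (p : ℕ → Q.A) : Prop :=
  ∀ i : ℕ, i + 1 < m → Q.tgt (p i) = Q.src (p (i + 1)) ∧ Q.rel (p i) (p (i + 1))

/-- A (nontrivial) forbidden thread: a maximal forbidden path (of `m ≥ 1`
arrows), i.e. one which cannot be extended on either side. -/
def IsForbiddenThread (Q : GentleData) (m : ℕ) (p : ℕ → Q.A) : Prop :=
  1 ≤ m ∧ IsForbiddenPath Q m p ∧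
  (∀ b : Q.A, Q.tgt b = Q.src (p 0) → ¬ Q.rel b (p 0)) ∧
  (∀ b : Q.A, Q.src b = Q.tgt (p (m - 1)) → ¬ Q.rel (p (m - 1)) b)

/-- A trivial forbidden thread at a vertex `v` (of length `0`). -/
def IsTrivialForbiddenThread (Q : GentleData) (v : Q.V) : Prop :=
  ({a : Q.A | Q.tgt a = v} = ∅) ∨ ({a : Q.A | Q.src a = v} = ∅) ∨
  (∃ b b' : Q.A, {a : Q.A | Q.tgt a = v} = {b} ∧ {a : Q.A | Q.src a = v} = {b'} ∧ ¬ Q.rel b b')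

/-- The set of lengths of the forbidden threads of finite length. -/
def finiteForbiddenThreadLengths (Q : GentleData) : Set ℕ∞ :=
  {n : ℕ∞ | (n = 0 ∧ ∃ v : Q.V, IsTrivialForbiddenThread Q v) ∨
    (∃ m : ℕ, n = (m : ℕ∞) ∧ ∃ p : ℕ → Q.A, IsForbiddenThread Q m p)}

/-- The set of lengths of all forbidden threads; an oriented cycle with full
relations gives rise to a forbidden thread of infinite length. -/
def forbiddenThreadLengths (Q : GentleData) : Set ℕ∞ :=
  finiteForbiddenThreadLengths Q ∪
    {n : ℕ∞ | n = ⊤ ∧ ∃ ℓ : ℕ, 1 ≤ ℓ ∧ ∃ c : ZMod ℓ → Q.A, IsOCFCycle Q c}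

section Dimensions

/-- `projDimLE R n M` : the `R`-module `M` admits a projective resolution of
length at most `n`. -/
def projDimLE (R : Type) [Ring R] (n : ℕ) (M : Type) [AddCommGroup M] [Module R M] : Prop :=
  ∃ (P : ℕ → ModuleCat.{0} R) (d : ∀ i : ℕ, ↥(P (i + 1)) →ₗ[R] ↥(P i)) (ε : ↥(P 0) →ₗ[R] M),
    (∀ i, Module.Projective R ↥(P i)) ∧
    Function.Surjective ε ∧ Function.Exact (d 0) ε ∧
    (∀ i, Function.Exact (d (i + 1)) (d i)) ∧
    (∀ i, n ≤ i → Subsingleton ↥(P (i + 1)))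

/-- `injDimLE R n M` : the `R`-module `M` admits an injective coresolution of
length at most `n`. -/
def injDimLE (R : Type) [Ring R] (n : ℕ) (M : Type) [AddCommGroup M] [Module R M] : Prop :=
  ∃ (E : ℕ → ModuleCat.{0} R) (d : ∀ i : ℕ, ↥(E i) →ₗ[R] ↥(E (i + 1))) (ι : M →ₗ[R] ↥(E 0)),
    (∀ i, Module.Injective R ↥(E i)) ∧
    Function.Injective ι ∧ Function.Exact ι (d 0) ∧
    (∀ i, Function.Exact (d i) (d (i + 1))) ∧
    (∀ i, n ≤ i → Subsingleton ↥(E (i + 1)))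

/-- The projective dimension of a module, in `ℕ∞`. -/
noncomputable def projDim (R : Type) [Ring R] (M : Type) [AddCommGroup M] [Module R M] : ℕ∞ :=
  sInf {n : ℕ∞ | ∃ m : ℕ, n = (m : ℕ∞) ∧ projDimLE R m M}

/-- The injective dimension of a module, in `ℕ∞`. -/
noncomputable def injDim (R : Type) [Ring R] (M : Type) [AddCommGroup M] [Module R M] : ℕ∞ :=
  sInf {n : ℕ∞ | ∃ m : ℕ, n = (m : ℕ∞) ∧ injDimLE R m M}

/-- The global dimension of a ring: the supremum of the projective dimensions
of all finitely generated modules. -/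
noncomputable def globalDim (R : Type) [Ring R] : ℕ∞ :=
  ⨆ (M : ModuleCat.{0} R) (_ : Module.Finite R ↥M), projDim R ↥M

/-- The left self-injective dimension: the injective dimension of `R` as a
left module over itself. -/
noncomputable def leftSelfInjDim (R : Type) [Ring R] : ℕ∞ := injDim R R

/-- The right self-injective dimension: the injective dimension of `R` as a
right module over itself. -/
noncomputable def rightSelfInjDim (R : Type) [Ring R] : ℕ∞ := injDim Rᵐᵒᵖ R

end Dimensions

section Radical

/-- The radical of a module: the intersection of its maximal submodules. -/
def radMod (R : Type) [Ring R] (M : Type) [AddCommGroup M] [Module R M] : Submodule R M :=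
  sInf {N : Submodule R M | IsCoatom N}

/-- The top of a module: the quotient by its radical. -/
abbrev topMod (R : Type) [Ring R] (M : Type) [AddCommGroup M] [Module R M] : Type :=
  M ⧸ radMod R M

/-- The socle of a module: the sum of its simple submodules. -/
def socMod (R : Type) [Ring R] (M : Type) [AddCommGroup M] [Module R M] : Submodule R M :=
  sSup {N : Submodule R M | IsAtom N}

/-- The simple right `A`-module `S(v)` at a vertex `v`, realized as the top of
the indecomposable projective `e_v A`. -/
noncomputable abbrev SimpleAt (k : Type) [Field k] (Q : GentleData) (v : Q.V) : Type :=
  topMod (GentleAlgebra k Q)ᵐᵒᵖ ↥(vertexModule k Q v)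

end Radical

section Gorenstein

/-- An indecomposable module: nontrivial, and admitting no nontrivial direct
sum decomposition. -/
def IndecomposableModule (R : Type) [Ring R] (M : Type) [AddCommGroup M] [Module R M] : Prop :=
  Nontrivial M ∧ ∀ N N' : Submodule R M, IsCompl N N' → N = ⊥ ∨ N' = ⊥

/-- A Gorenstein projective module: a syzygy of an acyclic complex of
projective modules which remains acyclic after applying `Hom(−, R)`. -/
def IsGorensteinProjective (R : Type) [Ring R] (G : Type) [AddCommGroup G] [Module R G] :
    Prop :=
  ∃ (P : ℤ → ModuleCat.{0} R) (d : ∀ n : ℤ, ↥(P n) →ₗ[R] ↥(P (n + 1))),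
    (∀ n, Module.Projective R ↥(P n)) ∧
    (∀ n, Function.Exact (d n) (d (n + 1))) ∧
    (∀ n : ℤ, Function.Exact
      (fun g : ↥(P (n + 1 + 1)) →ₗ[R] R => g ∘ₗ d (n + 1))
      (fun g : ↥(P (n + 1)) →ₗ[R] R => g ∘ₗ d n)) ∧
    Nonempty (G ≃ₗ[R] ↥(LinearMap.range (d (-1))))

/-- An indecomposable non-projective Gorenstein projective module. -/
def IsIndecNonProjGP (R : Type) [Ring R] (M : Type) [AddCommGroup M] [Module R M] : Prop :=
  IndecomposableModule R M ∧ IsGorensteinProjective R M ∧ ¬ Module.Projective R M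

/-- An indecomposable Gorenstein projective module. -/
def IsIndecGP (R : Type) [Ring R] (M : Type) [AddCommGroup M] [Module R M] : Prop :=
  IndecomposableModule R M ∧ IsGorensteinProjective R M

/-- Indecomposable non-projective Gorenstein projective right `A`-modules
(realized as right submodules of `A`), up to isomorphism. -/
noncomputable def npgpSetoid (k : Type) [Field k] (Q : GentleData) :
    Setoid {N : Submodule (GentleAlgebra k Q)ᵐᵒᵖ (GentleAlgebra k Q) //
      IsIndecNonProjGP (GentleAlgebra k Q)ᵐᵒᵖ ↥N} where
  r N N' := Nonempty (↥N.1 ≃ₗ[(GentleAlgebra k Q)ᵐᵒᵖ] ↥N'.1)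
  iseqv := ⟨fun _ => ⟨LinearEquiv.refl _ _⟩, fun ⟨e⟩ => ⟨e.symm⟩, fun ⟨e⟩ ⟨f⟩ => ⟨e.trans f⟩⟩

/-- The number of isomorphism classes of indecomposable non-projective
Gorenstein projective right `A`-modules. -/
noncomputable def numIndecNonProjGP (k : Type) [Field k] (Q : GentleData) : ℕ :=
  Nat.card (Quotient (npgpSetoid k Q))

/-- Indecomposable Gorenstein projective right `A`-modules (realized as right
submodules of `A`), up to isomorphism. -/
noncomputable def gpSetoid (k : Type) [Field k] (Q : GentleData) :
    Setoid {N : Submodule (GentleAlgebra k Q)ᵐᵒᵖ (GentleAlgebra k Q) //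
      IsIndecGP (GentleAlgebra k Q)ᵐᵒᵖ ↥N} where
  r N N' := Nonempty (↥N.1 ≃ₗ[(GentleAlgebra k Q)ᵐᵒᵖ] ↥N'.1)
  iseqv := ⟨fun _ => ⟨LinearEquiv.refl _ _⟩, fun ⟨e⟩ => ⟨e.symm⟩, fun ⟨e⟩ ⟨f⟩ => ⟨e.trans f⟩⟩

end Gorenstein

section Strings

/-- A walk in the quiver: `len` letters, the `i`-th letter (for `1 ≤ i ≤ len`)
joining the vertex `vtx (i-1)` to `vtx i`; a letter `(a, true)` is the arrow
`a` read forwards (direct), and `(a, false)` is its formal inverse. -/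
structure StrWalk (Q : GentleData) : Type where
  len : ℕ
  vtx : ℕ → Q.V
  letter : ℕ → Q.A × Bool

/-- The walk is a string: letters join consecutive vertices, the walk is
reduced (no `a a⁻` nor `a⁻ a`), and it avoids the relations. -/
def IsString (Q : GentleData) (w : StrWalk Q) : Prop :=
  (∀ i : ℕ, 1 ≤ i → i ≤ w.len →
    ((w.letter i).2 = true →
      Q.src (w.letter i).1 = w.vtx (i - 1) ∧ Q.tgt (w.letter i).1 = w.vtx i) ∧
    ((w.letter i).2 = false →
      Q.tgt (w.letter i).1 = w.vtx (i - 1) ∧ Q.src (w.letter i).1 = w.vtx i)) ∧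
  (∀ i : ℕ, 1 ≤ i → i + 1 ≤ w.len →
    (¬ ((w.letter i).1 = (w.letter (i + 1)).1 ∧ (w.letter i).2 ≠ (w.letter (i + 1)).2)) ∧
    ((w.letter i).2 = true → (w.letter (i + 1)).2 = true →
      ¬ Q.rel (w.letter i).1 (w.letter (i + 1)).1) ∧
    ((w.letter i).2 = false → (w.letter (i + 1)).2 = false →
      ¬ Q.rel (w.letter (i + 1)).1 (w.letter i).1))

/-- `M` is the string module `M(w)` of the string `w`: it has a `k`-basis
indexed by the vertices `0, …, len` of the walk, the idempotent of a vertex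
fixes exactly the basis vectors sitting at that vertex, and an arrow moves
basis vectors along the corresponding letters of the walk. -/
def IsStringModule (k : Type) [Field k] (Q : GentleData) (w : StrWalk Q) (M : Type)
    [AddCommGroup M] [Module k M] [Module (GentleAlgebra k Q)ᵐᵒᵖ M] : Prop :=
  (∀ (c : k) (m : M), (algebraMap k (GentleAlgebra k Q)ᵐᵒᵖ c) • m = c • m) ∧
  ∃ b : ℕ → M,
    LinearIndependent k (fun i : Fin (w.len + 1) => b i) ∧
    Submodule.span k (b '' {i : ℕ | i ≤ w.len}) = ⊤ ∧
    (∀ i : ℕ, i ≤ w.len → ∀ v : Q.V,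
      (op (idemOf k Q v)) • b i = if w.vtx i = v then b i else 0) ∧
    (∀ i : ℕ, i ≤ w.len → ∀ a : Q.A,
      (op (arrOf k Q a)) • b i =
        (if i + 1 ≤ w.len ∧ w.letter (i + 1) = (a, true) then b (i + 1) else 0) +
        (if 1 ≤ i ∧ w.letter i = (a, false) then b (i - 1) else 0))

/-- The vertex at position `i` is a source of the walk: the adjacent letters
point away from it. -/
def sourceAt (Q : GentleData) (w : StrWalk Q) (i : ℕ) : Prop :=
  i ≤ w.len ∧ (i = 0 ∨ (w.letter i).2 = false) ∧ (i = w.len ∨ (w.letter (i + 1)).2 = true)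

/-- The vertex at position `i` is a sink of the walk: the adjacent letters
point towards it. -/
def sinkAt (Q : GentleData) (w : StrWalk Q) (i : ℕ) : Prop :=
  i ≤ w.len ∧ (i = 0 ∨ (w.letter i).2 = true) ∧ (i = w.len ∨ (w.letter (i + 1)).2 = false)

/-- Left maximality of the inverse prefix (letters `1, …, i`) of a walk of the
shape "inverse prefix followed by direct suffix": the underlying direct path
out of the vertex at position `i` cannot be prolonged (and, when the prefix is
trivial, no second arrow leaves the starting vertex). -/
def LeftMaxAt (Q : GentleData) (w : StrWalk Q) (i : ℕ) : Prop :=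
  if 1 ≤ i then ∀ α : Q.A, Q.src α = w.vtx 0 → Q.rel (w.letter 1).1 α
  else ∀ α : Q.A, Q.src α = w.vtx 0 → (1 ≤ w.len ∧ α = (w.letter 1).1)

/-- Right maximality of the direct suffix (letters `i+1, …, len`) of a walk of
the shape "inverse prefix followed by direct suffix". -/
def RightMaxAt (Q : GentleData) (w : StrWalk Q) (i : ℕ) : Prop :=
  if i < w.len then ∀ β : Q.A, Q.src β = w.vtx w.len → Q.rel (w.letter w.len).1 β
  else ∀ β : Q.A, Q.src β = w.vtx w.len → (1 ≤ w.len ∧ β = (w.letter w.len).1)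

end Strings

/-!
The arrow ideal `aA` has the explicit projective cover `x ↦ ax` from `e_v A`, with `v` the target
of `a`. A left Fox derivative along `a`, that is a `k`-linear map "delete the initial letter `a`",
shows that the kernel of this cover is generated by the arrows `b` with `ab ∈ I`, and that the
ideals `bA` are independent. Hence `Ω(aA)` is the direct sum of the `bA` with `ab ∈ I`, and, as
`aA` is projective only if there is no such `b`, its projective dimension is the length of the
longest forbidden continuation of `a`: it is infinite along a cycle with full relations, and
bounded if there is none. A simple right module is `e_v A` modulo the sum of the `bA` with `b`
starting at `v`, so a bound for the arrow ideals bounds all modules of finite length.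
-/

section Homological

open CategoryTheory

universe u v

variable {R : Type u} [Ring R]

theorem hasProjectiveDimensionLE_zero_iff [Small.{v} R] {M : Type v} [AddCommGroup M]
    [Module R M] :
    HasProjectiveDimensionLE (ModuleCat.of R M) 0 ↔ Module.Projective R M := by
  rw [← projective_iff_hasProjectiveDimensionLE_zero, ← IsProjective.iff_projective]

variable {M N : Type v} [AddCommGroup M] [Module R M] [AddCommGroup N] [Module R N]

theorem hasProjectiveDimensionLE_of_subsingleton [Subsingleton M] {n : ℕ} :
    HasProjectiveDimensionLE (ModuleCat.of R M) n :=
  have := ModuleCat.isZero_of_subsingleton (ModuleCat.of R M)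
  inferInstance

theorem hasProjectiveDimensionLE_congr (e : M ≃ₗ[R] N) {n : ℕ} :
    HasProjectiveDimensionLE (ModuleCat.of R M) n ↔
      HasProjectiveDimensionLE (ModuleCat.of R N) n :=
  ⟨fun _ => hasProjectiveDimensionLT_of_iso e.toModuleIso _,
    fun _ => hasProjectiveDimensionLT_of_iso e.symm.toModuleIso _⟩

theorem hasProjectiveDimensionLE_succ_iff_ker [Small.{v} R] [Module.Projective R M]
    {f : M →ₗ[R] N} (hf : Function.Surjective f) {n : ℕ} :
    HasProjectiveDimensionLE (ModuleCat.of R N) (n + 1) ↔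
      HasProjectiveDimensionLE (ModuleCat.of R (LinearMap.ker f)) n :=
  (LinearMap.shortExact_shortComplexKer hf).hasProjectiveDimensionLT_X₃_iff n
    ((IsProjective.iff_projective M).1 ‹_›)

theorem hasProjectiveDimensionLE_of_submodule_of_quotient (p : Submodule R M) {n : ℕ}
    (hp : HasProjectiveDimensionLE (ModuleCat.of R p) n)
    (hq : HasProjectiveDimensionLE (ModuleCat.of R (M ⧸ p)) n) :
    HasProjectiveDimensionLE (ModuleCat.of R M) n := by
  refine (LinearMap.shortExact_shortComplexKer p.mkQ_surjective).hasProjectiveDimensionLT_X₂ _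
    ?_ hq
  exact (hasProjectiveDimensionLE_congr (LinearEquiv.ofEq _ _ p.ker_mkQ)).2 hp

theorem hasProjectiveDimensionLE_of_isFiniteLength {n : ℕ}
    (hsimple : ∀ (S : Type v) [AddCommGroup S] [Module R S] [IsSimpleModule R S],
      HasProjectiveDimensionLE (ModuleCat.of R S) n)
    (hM : IsFiniteLength R M) : HasProjectiveDimensionLE (ModuleCat.of R M) n := by
  induction hM with
  | of_subsingleton => exact hasProjectiveDimensionLE_of_subsingleton
  | of_simple_quotient _ ih =>
    exact hasProjectiveDimensionLE_of_submodule_of_quotient _ ih (hsimple _)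

theorem hasProjectiveDimensionLE_prod_iff {n : ℕ} :
    HasProjectiveDimensionLE (ModuleCat.of R (M × N)) n ↔
      HasProjectiveDimensionLE (ModuleCat.of R M) n ∧
        HasProjectiveDimensionLE (ModuleCat.of R N) n := by
  have iso := ModuleCat.biprodIsoProd (ModuleCat.of R M) (ModuleCat.of R N)
  constructor
  · intro _
    have : HasProjectiveDimensionLE (ModuleCat.of R M ⊞ ModuleCat.of R N) n :=
      hasProjectiveDimensionLT_of_iso iso.symm _
    let retract_fst : Retract (ModuleCat.of R M) (ModuleCat.of R M ⊞ ModuleCat.of R N) :=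
      ⟨Limits.biprod.inl, Limits.biprod.fst, Limits.biprod.inl_fst⟩
    let retract_snd : Retract (ModuleCat.of R N) (ModuleCat.of R M ⊞ ModuleCat.of R N) :=
      ⟨Limits.biprod.inr, Limits.biprod.snd, Limits.biprod.inr_snd⟩
    exact ⟨retract_fst.hasProjectiveDimensionLT _, retract_snd.hasProjectiveDimensionLT _⟩
  · rintro ⟨_, _⟩
    exact hasProjectiveDimensionLT_of_iso iso _

theorem hasProjectiveDimensionLE_sup_iff {p q : Submodule R M} (hpq : Disjoint p q) {n : ℕ} :
    HasProjectiveDimensionLE (ModuleCat.of R ↥(p ⊔ q)) n ↔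
      HasProjectiveDimensionLE (ModuleCat.of R p) n ∧
        HasProjectiveDimensionLE (ModuleCat.of R q) n := by
  have injective : Function.Injective (p.subtype.coprod q.subtype) := by
    rw [← LinearMap.ker_eq_bot, LinearMap.ker_coprod_of_disjoint_range _ _ (by simpa)]
    simp
  have e : (p × q) ≃ₗ[R] ↥(p ⊔ q) :=
    (LinearEquiv.ofInjective _ injective).trans
      (LinearEquiv.ofEq _ _ (Submodule.sup_eq_range p q).symm)
  rw [← hasProjectiveDimensionLE_congr e, hasProjectiveDimensionLE_prod_iff]

theorem hasProjectiveDimensionLE_biSup_iff {ι : Type*} {p : ι → Submodule R M}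
    (hp : iSupIndep p) {s : Set ι} (hs : s.Finite) {n : ℕ} :
    HasProjectiveDimensionLE (ModuleCat.of R ↥(⨆ i ∈ s, p i)) n ↔
      ∀ i ∈ s, HasProjectiveDimensionLE (ModuleCat.of R (p i)) n := by
  induction s, hs using Set.Finite.induction_on with
  | empty =>
    rw [iSup_emptyset]
    simpa using hasProjectiveDimensionLE_of_subsingleton
  | @insert i s hi _ ih =>
    rw [iSup_insert, hasProjectiveDimensionLE_sup_iff (hp.disjoint_biSup hi), ih,
      Set.forall_mem_insert]

end Homological

section Resolution

open CategoryTheory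

variable {R : Type} [Ring R] {M : Type} [AddCommGroup M] [Module R M]

theorem projDimLE_zero_iff : projDimLE R 0 M ↔ Module.Projective R M := by
  constructor
  · rintro ⟨P, d, ε, projective, surjective, exact_ε, -, bounded⟩
    have := projective 0
    have : Subsingleton (P 1) := bounded 0 le_rfl
    have injective : Function.Injective ε := by
      rw [injective_iff_map_eq_zero]
      intro x hx
      obtain ⟨y, rfl⟩ := (exact_ε x).1 hx
      rw [Subsingleton.elim y 0, map_zero]
    exact Module.Projective.of_equiv (LinearEquiv.ofBijective ε ⟨injective, surjective⟩)
  · intro _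
    refine ⟨fun i => i.casesOn (.of R M) fun _ => .of R PUnit, fun _ => 0, LinearMap.id, ?_,
      Function.surjective_id, fun x => by simp [eq_comm], fun i x => by simp, ?_⟩
    · rintro (_ | i)
      · assumption
      · exact inferInstanceAs (Module.Projective R PUnit)
    · exact fun i _ => inferInstanceAs (Subsingleton PUnit)

theorem projDimLE.ker_of_succ {n : ℕ} (h : projDimLE R (n + 1) M) :
    ∃ (P : ModuleCat.{0} R) (f : P →ₗ[R] M), Module.Projective R P ∧ Function.Surjective f ∧
      projDimLE R n (LinearMap.ker f) := by
  obtain ⟨P, d, ε, projective, surjective, exact_ε, exact_d, bounded⟩ := h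
  refine ⟨P 0, ε, projective 0, surjective, fun i => P (i + 1), fun i => d (i + 1),
    (d 0).codRestrict (LinearMap.ker ε) exact_ε.apply_apply_eq_zero, fun i => projective (i + 1),
    ?_, fun x => Subtype.ext_iff.trans (exact_d 0 x), fun i => exact_d (i + 1),
    fun i hi => bounded (i + 1) (by lia)⟩
  rintro ⟨x, hx⟩
  obtain ⟨y, rfl⟩ := (exact_ε x).1 hx
  exact ⟨y, rfl⟩

theorem projDimLE.succ_of_ker {P : Type} [AddCommGroup P] [Module R P] [Module.Projective R P]
    {f : P →ₗ[R] M} (hf : Function.Surjective f) {n : ℕ} (h : projDimLE R n (LinearMap.ker f)) :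
    projDimLE R (n + 1) M := by
  obtain ⟨P', d, ε, projective, surjective, exact_ε, exact_d, bounded⟩ := h
  refine ⟨fun i => i.casesOn (.of R P) P', fun
    | 0 => (LinearMap.ker f).subtype ∘ₗ ε
    | i + 1 => d i, f, ?_, hf, fun x => ⟨fun hx => ?_, ?_⟩, ?_, ?_⟩
  · rintro (_ | i)
    · assumption
    · exact projective i
  · obtain ⟨y, hy⟩ := surjective ⟨x, hx⟩
    exact ⟨y, congrArg Subtype.val hy⟩
  · rintro ⟨y, rfl⟩
    exact (ε y).2
  · rintro (_ | i)
    · exact fun x => Subtype.ext_iff.symm.trans (exact_ε x)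
    · exact exact_d i
  · rintro (_ | i) hi
    · lia
    · exact bounded i (by lia)

theorem projDimLE_iff_hasProjectiveDimensionLE {n : ℕ} :
    projDimLE R n M ↔ HasProjectiveDimensionLE (ModuleCat.of R M) n := by
  induction n generalizing M with
  | zero => rw [projDimLE_zero_iff, hasProjectiveDimensionLE_zero_iff]
  | succ n ih =>
    constructor
    · intro h
      obtain ⟨P, f, _, surjective, hker⟩ := h.ker_of_succ
      exact (hasProjectiveDimensionLE_succ_iff_ker surjective).2 (ih.1 hker)
    · intro h
      have surjective := Finsupp.linearCombination_id_surjective R M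
      exact .succ_of_ker surjective
        (ih.2 ((hasProjectiveDimensionLE_succ_iff_ker surjective).1 h))

theorem projDim_le_iff {n : ℕ} :
    projDim R M ≤ n ↔ HasProjectiveDimensionLE (ModuleCat.of R M) n := by
  rw [← projDimLE_iff_hasProjectiveDimensionLE]
  refine ⟨fun h => ?_, fun h => sInf_le ⟨n, rfl, h⟩⟩
  have ne_top : projDim R M ≠ ⊤ := (h.trans_lt (ENat.natCast_lt_top n)).ne
  have nonempty : {n : ℕ∞ | ∃ m : ℕ, n = m ∧ projDimLE R m M}.Nonempty := by
    by_contra! empty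
    exact ne_top (by rw [projDim, empty, sInf_empty])
  obtain ⟨m, hm, hM⟩ := csInf_mem nonempty
  have hmn : m ≤ n := by
    rw [projDim, hm] at h
    exact_mod_cast h
  rw [projDimLE_iff_hasProjectiveDimensionLE] at hM ⊢
  exact hasProjectiveDimensionLT_of_ge _ (m + 1) _ (by lia)

theorem globalDim_le_iff {n : ℕ} :
    globalDim R ≤ n ↔ ∀ M : ModuleCat.{0} R, Module.Finite R M → HasProjectiveDimensionLE M n := by
  simp only [globalDim, iSup_le_iff, projDim_le_iff, ModuleCat.of_coe]

theorem globalDim_eq_top_iff :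
    globalDim R = ⊤ ↔
      ∀ n, ∃ M : ModuleCat.{0} R, Module.Finite R M ∧ ¬ HasProjectiveDimensionLE M n := by
  have exists_le : globalDim R ≠ ⊤ ↔ ∃ n : ℕ, globalDim R ≤ n :=
    ⟨fun h => ⟨_, (ENat.natCast_toNat h).ge⟩,
      fun ⟨n, hn⟩ => (hn.trans_lt (ENat.natCast_lt_top n)).ne⟩
  rw [← not_iff_not, ← ne_eq, exists_le]
  simp only [globalDim_le_iff]
  push Not
  rfl

end Resolution

section RightModules

open CategoryTheory

universe u

variable {R : Type u} [Ring R]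

theorem mem_span_op_singleton {x y : R} : y ∈ Submodule.span Rᵐᵒᵖ {x} ↔ ∃ z, x * z = y :=
  Submodule.mem_span_singleton.trans MulOpposite.op_surjective.exists

theorem mul_mem_span_op_singleton (x z : R) : x * z ∈ Submodule.span Rᵐᵒᵖ {x} :=
  mem_span_op_singleton.2 ⟨z, rfl⟩

theorem mul_eq_of_mem_span_op_singleton {e x : R} (he : IsIdempotentElem e)
    (hx : x ∈ Submodule.span Rᵐᵒᵖ {e}) : e * x = x := by
  obtain ⟨z, rfl⟩ := mem_span_op_singleton.1 hx
  rw [← mul_assoc, he.eq]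

theorem projective_op_self : Module.Projective Rᵐᵒᵖ R :=
  let opEquiv : Rᵐᵒᵖ ≃ₗ[Rᵐᵒᵖ] R :=
    { opAddEquiv.symm with map_smul' := fun _ _ => rfl }
  .of_equiv opEquiv

variable {M : Type*} [AddCommGroup M] [Module Rᵐᵒᵖ M]

/-- The surjection `x ↦ m x` from the ring onto the cyclic right submodule generated by `m`, right
modules being encoded as left modules over the opposite ring. -/
def spanSingletonCover (m : M) : R →ₗ[Rᵐᵒᵖ] Submodule.span Rᵐᵒᵖ {m} where
  toFun x := ⟨op x • m, Submodule.smul_mem _ _ (Submodule.mem_span_singleton_self m)⟩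
  map_add' x y := Subtype.ext (add_smul (op x) (op y) m)
  map_smul' c x := Subtype.ext (mul_smul c (op x) m)

theorem spanSingletonCover_surjective (m : M) :
    Function.Surjective (spanSingletonCover (R := R) m) := by
  rintro ⟨y, hy⟩
  obtain ⟨c, rfl⟩ := Submodule.mem_span_singleton.1 hy
  exact ⟨unop c, rfl⟩

theorem mem_ker_spanSingletonCover {m : M} {x : R} :
    x ∈ LinearMap.ker (spanSingletonCover m) ↔ op x • m = 0 :=
  Subtype.ext_iff

theorem projective_span_op_singleton {e : R} (he : IsIdempotentElem e) :
    Module.Projective Rᵐᵒᵖ (Submodule.span Rᵐᵒᵖ {e}) :=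
  have := projective_op_self (R := R)
  .of_split (Submodule.subtype _) (spanSingletonCover e)
    (LinearMap.ext fun x => Subtype.ext (mul_eq_of_mem_span_op_singleton he x.2))

theorem hasProjectiveDimensionLE_succ_span_singleton_iff {M : Type u} [AddCommGroup M]
    [Module Rᵐᵒᵖ M] {e : R} (he : IsIdempotentElem e) {m : M} (hm : op e • m = m) {n : ℕ} :
    HasProjectiveDimensionLE (ModuleCat.of Rᵐᵒᵖ (Submodule.span Rᵐᵒᵖ {m})) (n + 1) ↔
      HasProjectiveDimensionLE (ModuleCat.of Rᵐᵒᵖ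
        ↥(Submodule.span Rᵐᵒᵖ {e} ⊓ LinearMap.ker (spanSingletonCover (R := R) m))) n := by
  have := projective_span_op_singleton he
  let cover := (spanSingletonCover m).domRestrict (Submodule.span Rᵐᵒᵖ {e})
  have surjective : Function.Surjective cover := fun y => by
    obtain ⟨x, rfl⟩ := spanSingletonCover_surjective (R := R) m y
    refine ⟨⟨e * x, mul_mem_span_op_singleton e x⟩, Subtype.ext ?_⟩
    change op (e * x) • m = op x • m
    rw [op_mul, mul_smul, hm]
  have ker_cover : LinearMap.ker cover = (Submodule.span Rᵐᵒᵖ {e} ⊓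
      LinearMap.ker (spanSingletonCover m)).submoduleOf (Submodule.span Rᵐᵒᵖ {e}) := by
    ext x
    simp [cover, Submodule.submoduleOf]
  rw [hasProjectiveDimensionLE_succ_iff_ker surjective, ker_cover]
  exact hasProjectiveDimensionLE_congr (Submodule.submoduleOfEquivOfLe inf_le_left)

theorem exists_mul_eq_zero_of_projective_span_singleton {m : M}
    (hm : Module.Projective Rᵐᵒᵖ (Submodule.span Rᵐᵒᵖ {m})) :
    ∃ y : R, op y • m = m ∧ ∀ x : R, op x • m = 0 → y * x = 0 := by
  obtain ⟨splitting, h_splitting⟩ := Module.projective_lifting_property (spanSingletonCover m) .id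
    (spanSingletonCover_surjective (R := R) m)
  let generator : Submodule.span Rᵐᵒᵖ {m} := ⟨m, Submodule.mem_span_singleton_self m⟩
  refine ⟨splitting generator, congrArg Subtype.val (LinearMap.congr_fun h_splitting generator),
    fun x hx => ?_⟩
  have : op x • generator = 0 := Subtype.ext hx
  rw [← op_smul_eq_mul, ← map_smul, this, map_zero]

end RightModules

section Presentation

variable {k : Type} [Field k] {Q : GentleData}

theorem completeOrthogonalIdempotents_idemOf :
    CompleteOrthogonalIdempotents (idemOf k Q) where
  idem v := by
    simpa only [IsIdempotentElem, idemOf, ofGen, map_mul] using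
      RingQuot.mkAlgHom_rel k (GentleRel.idem (k := k) v)
  ortho v w h := by
    simpa only [idemOf, ofGen, map_mul, map_zero] using
      RingQuot.mkAlgHom_rel k (GentleRel.orth (k := k) v w h)
  complete := by
    simpa only [idemOf, ofGen, map_sum, map_one] using
      RingQuot.mkAlgHom_rel k (GentleRel.sum_idem (k := k))

theorem isIdempotentElem_idemOf (v : Q.V) : IsIdempotentElem (idemOf k Q v) :=
  completeOrthogonalIdempotents_idemOf.idem v

theorem idemOf_mul_arrOf (a : Q.A) : idemOf k Q (Q.src a) * arrOf k Q a = arrOf k Q a := by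
  simpa only [idemOf, arrOf, ofGen, map_mul] using
    RingQuot.mkAlgHom_rel k (GentleRel.src_mul (k := k) a)

theorem arrOf_mul_idemOf (a : Q.A) : arrOf k Q a * idemOf k Q (Q.tgt a) = arrOf k Q a := by
  simpa only [idemOf, arrOf, ofGen, map_mul] using
    RingQuot.mkAlgHom_rel k (GentleRel.mul_tgt (k := k) a)

theorem arrOf_mul_arrOf_of_rel {a b : Q.A} (h : Q.rel a b) : arrOf k Q a * arrOf k Q b = 0 := by
  simpa only [arrOf, ofGen, map_mul, map_zero] using
    RingQuot.mkAlgHom_rel k (GentleRel.relation (k := k) a b h)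

theorem idemOf_mul_arrOf_of_ne {v : Q.V} {a : Q.A} (h : Q.src a ≠ v) :
    idemOf k Q v * arrOf k Q a = 0 := by
  rw [← idemOf_mul_arrOf, ← mul_assoc, completeOrthogonalIdempotents_idemOf.ortho h.symm, zero_mul]

theorem arrOf_mul_arrOf_of_ne {a b : Q.A} (h : Q.tgt a ≠ Q.src b) :
    arrOf k Q a * arrOf k Q b = 0 := by
  rw [← arrOf_mul_idemOf, mul_assoc, idemOf_mul_arrOf_of_ne h.symm, mul_zero]

@[elab_as_elim]
theorem GentleAlgebra.induction_on {motive : GentleAlgebra k Q → Prop} (x : GentleAlgebra k Q)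
    (algebraMap : ∀ c, motive (algebraMap k _ c)) (idemOf : ∀ v, motive (idemOf k Q v))
    (arrOf : ∀ a, motive (arrOf k Q a)) (add : ∀ x y, motive x → motive y → motive (x + y))
    (mul : ∀ x y, motive x → motive y → motive (x * y)) : motive x := by
  obtain ⟨y, rfl⟩ := RingQuot.mkAlgHom_surjective k (GentleRel k Q) x
  induction y using FreeAlgebra.induction with
  | grade0 c => simpa only [AlgHom.commutes] using algebraMap c
  | grade1 g =>
    cases g with
    | vertex v => exact idemOf v
    | arrow a => exact arrOf a
  | mul y z hy hz => simpa only [map_mul] using mul _ _ hy hz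
  | add y z hy hz => simpa only [map_add] using add _ _ hy hz

variable {B : Type*} [Ring B] [Algebra k B]

theorem GentleAlgebra.algHom_ext {φ ψ : GentleAlgebra k Q →ₐ[k] B}
    (idem : ∀ v, φ (idemOf k Q v) = ψ (idemOf k Q v))
    (arr : ∀ a, φ (arrOf k Q a) = ψ (arrOf k Q a)) : φ = ψ := by
  refine RingQuot.ringQuot_ext' _ _ _ (FreeAlgebra.hom_ext (funext fun g => ?_))
  cases g with
  | vertex v => exact idem v
  | arrow a => exact arr a

section Lift

variable {f : Q.V → B} {g : Q.A → B}

/-- The universal property of `kQ/I`: images of the vertices and arrows satisfying the defining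
relations determine an algebra homomorphism. -/
noncomputable def GentleAlgebra.lift (hf : CompleteOrthogonalIdempotents f)
    (hsrc : ∀ a, f (Q.src a) * g a = g a) (htgt : ∀ a, g a * f (Q.tgt a) = g a)
    (hrel : ∀ a b, Q.rel a b → g a * g b = 0) : GentleAlgebra k Q →ₐ[k] B :=
  RingQuot.liftAlgHom k ⟨FreeAlgebra.lift k fun x => x.casesOn f g, fun x y h => by
    cases h with
    | idem v => simpa using (hf.idem v).eq
    | orth v w h => simpa using hf.ortho h
    | sum_idem => simpa using hf.complete
    | src_mul a => simpa using hsrc a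
    | mul_tgt a => simpa using htgt a
    | relation a b h => simpa using hrel a b h⟩

variable (hf : CompleteOrthogonalIdempotents f)
    (hsrc : ∀ a, f (Q.src a) * g a = g a) (htgt : ∀ a, g a * f (Q.tgt a) = g a)
    (hrel : ∀ a b, Q.rel a b → g a * g b = 0)

@[simp]
theorem GentleAlgebra.lift_idemOf (v : Q.V) :
    GentleAlgebra.lift (k := k) hf hsrc htgt hrel (idemOf k Q v) = f v := by
  rw [lift, idemOf, ofGen, RingQuot.liftAlgHom_mkAlgHom_apply, FreeAlgebra.lift_ι_apply]

@[simp]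
theorem GentleAlgebra.lift_arrOf (a : Q.A) :
    GentleAlgebra.lift (k := k) hf hsrc htgt hrel (arrOf k Q a) = g a := by
  rw [lift, arrOf, ofGen, RingQuot.liftAlgHom_mkAlgHom_apply, FreeAlgebra.lift_ι_apply]

end Lift

/-- The augmentation of `kQ/I` at a vertex `v`, i.e. the character of its simple module at `v`. -/
noncomputable def aug (k : Type) [Field k] (Q : GentleData) (v : Q.V) : GentleAlgebra k Q →ₐ[k] k :=
  GentleAlgebra.lift (f := fun w => if w = v then 1 else 0) (g := 0)
    { idem w := by simp [IsIdempotentElem]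
      ortho w w' h := by
        by_cases hw : w = v
        · simp [hw ▸ h.symm]
        · simp [hw]
      complete := by simp }
    (by simp) (by simp) (by simp)

@[simp]
theorem aug_idemOf (v w : Q.V) : aug k Q v (idemOf k Q w) = if w = v then 1 else 0 :=
  GentleAlgebra.lift_idemOf ..

@[simp]
theorem aug_arrOf (v : Q.V) (a : Q.A) : aug k Q v (arrOf k Q a) = 0 :=
  GentleAlgebra.lift_arrOf ..

end Presentation

section Derivations

variable {k : Type} [Field k] {Q : GentleData} {N : Type*} [AddCommGroup N] [Module k N]
  [Module (GentleAlgebra k Q)ᵐᵒᵖ N] [IsScalarTower k (GentleAlgebra k Q)ᵐᵒᵖ N]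

-- A derivation into `N` is a section of the square-zero extension by `N`, and those are given by
-- the universal property.
theorem exists_derivation [Module (GentleAlgebra k Q) N] [IsScalarTower k (GentleAlgebra k Q) N]
    [SMulCommClass (GentleAlgebra k Q) (GentleAlgebra k Q)ᵐᵒᵖ N] {δ : Q.A → N}
    (hsrc : ∀ a, idemOf k Q (Q.src a) • δ a = δ a)
    (htgt : ∀ a, op (idemOf k Q (Q.tgt a)) • δ a = δ a)
    (hrel : ∀ a b, Q.rel a b → arrOf k Q a • δ b + op (arrOf k Q b) • δ a = 0) :
    ∃ D : GentleAlgebra k Q →ₗ[k] N, (∀ a, D (arrOf k Q a) = δ a) ∧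
      ∀ x y, D (x * y) = x • D y + op y • D x := by
  let φ : GentleAlgebra k Q →ₐ[k] TrivSqZeroExt (GentleAlgebra k Q) N :=
    GentleAlgebra.lift (g := fun a => .inl (arrOf k Q a) + .inr (δ a))
      (completeOrthogonalIdempotents_idemOf.map (TrivSqZeroExt.inlHom (GentleAlgebra k Q) N))
      (fun a => TrivSqZeroExt.ext (by simp [idemOf_mul_arrOf]) (by simp [hsrc]))
      (fun a => TrivSqZeroExt.ext (by simp [arrOf_mul_idemOf]) (by simp [htgt]))
      (fun a b h => TrivSqZeroExt.ext (by simp [arrOf_mul_arrOf_of_rel h]) (by simp [hrel a b h]))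
  have fst_φ : ∀ x, (φ x).fst = x := by
    have : (TrivSqZeroExt.fstHom k (GentleAlgebra k Q) N).comp φ = .id k _ :=
      GentleAlgebra.algHom_ext (by simp [φ]) (by simp [φ])
    exact DFunLike.congr_fun this
  refine ⟨(TrivSqZeroExt.sndHom _ N).restrictScalars k ∘ₗ φ.toLinearMap, ?_, ?_⟩
  · simp [φ]
  · simp [fst_φ]

theorem exists_foxDerivative {a : Q.A} {n : N} (htgt : op (idemOf k Q (Q.tgt a)) • n = n)
    (hrel : ∀ b, Q.rel a b → op (arrOf k Q b) • n = 0) :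
    ∃ D : GentleAlgebra k Q →ₗ[k] N, (∀ b, D (arrOf k Q b) = if b = a then n else 0) ∧
      ∀ x y, D (x * y) = aug k Q (Q.src a) x • D y + op y • D x := by
  let : Module (GentleAlgebra k Q) N := Module.compHom N (aug k Q (Q.src a)).toRingHom
  have smul_eq (x : GentleAlgebra k Q) (m : N) : x • m = aug k Q (Q.src a) x • m := rfl
  have : IsScalarTower k (GentleAlgebra k Q) N :=
    ⟨fun c x m => by rw [smul_eq, smul_eq, map_smul, smul_assoc]⟩
  have : SMulCommClass (GentleAlgebra k Q) (GentleAlgebra k Q)ᵐᵒᵖ N :=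
    ⟨fun x y m => by rw [smul_eq, smul_eq, smul_comm]⟩
  refine exists_derivation (fun b => ?_) (fun b => ?_) (fun b c h => ?_)
  · rw [smul_eq]
    split_ifs with hb <;> simp [hb]
  · split_ifs with hb <;> simp [hb, htgt]
  · rw [smul_eq, aug_arrOf, zero_smul, zero_add]
    split_ifs with hb
    · exact hrel c (hb ▸ h)
    · rw [smul_zero]

end Derivations

section ArrowIdeals

/-- The length-two path `ab` is a path of `Q` lying in `I`. -/
def GentleData.Forbidden (Q : GentleData) (a b : Q.A) : Prop :=
  Q.tgt a = Q.src b ∧ Q.rel a b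

/-- The length-two path `ab` is a path of `Q` not lying in `I`. -/
def GentleData.Permitted (Q : GentleData) (a b : Q.A) : Prop :=
  Q.tgt a = Q.src b ∧ ¬ Q.rel a b

/-- The right ideal of `kQ/I` generated by a set of arrows. -/
noncomputable def arrowsModule (k : Type) [Field k] (Q : GentleData) (s : Set Q.A) :
    Submodule (GentleAlgebra k Q)ᵐᵒᵖ (GentleAlgebra k Q) :=
  ⨆ b ∈ s, arrowModule k Q b

variable {k : Type} [Field k] {Q : GentleData} {s : Set Q.A}

theorem arrOf_mul_mem_arrowsModule {b : Q.A} (hb : b ∈ s) (y : GentleAlgebra k Q) :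
    arrOf k Q b * y ∈ arrowsModule k Q s :=
  le_biSup (arrowModule k Q) hb (mul_mem_span_op_singleton _ y)

theorem arrOf_mem_arrowsModule {b : Q.A} (hb : b ∈ s) : arrOf k Q b ∈ arrowsModule k Q s := by
  simpa only [mul_one] using arrOf_mul_mem_arrowsModule (k := k) hb 1

theorem arrowsModule_le {I : Submodule (GentleAlgebra k Q)ᵐᵒᵖ (GentleAlgebra k Q)} :
    arrowsModule k Q s ≤ I ↔ ∀ b ∈ s, arrOf k Q b ∈ I := by
  simp only [arrowsModule, arrowModule, iSup_le_iff, Submodule.span_singleton_le_iff_mem]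

theorem arrowsModule_induction {motive : GentleAlgebra k Q → Prop}
    (arrOf_mul : ∀ b ∈ s, ∀ y, motive (arrOf k Q b * y)) (zero : motive 0)
    (add : ∀ x y, motive x → motive y → motive (x + y)) {x : GentleAlgebra k Q}
    (hx : x ∈ arrowsModule k Q s) : motive x := by
  rw [arrowsModule, iSup_subtype'] at hx
  refine Submodule.iSup_induction _ (motive := motive) hx (fun b y hy => ?_) zero add
  obtain ⟨z, rfl⟩ := mem_span_op_singleton.1 hy
  exact arrOf_mul b b.2 z

theorem aug_eq_zero_of_mem_arrowsModule (v : Q.V) {x : GentleAlgebra k Q}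
    (hx : x ∈ arrowsModule k Q s) : aug k Q v x = 0 :=
  arrowsModule_induction (motive := fun x => aug k Q v x = 0) (fun b _ y => by simp) (map_zero _)
    (fun x y hx hy => by rw [map_add, hx, hy, add_zero]) hx

theorem exists_foxDerivative_quotient (k : Type) [Field k] {Q : GentleData} (a : Q.A) :
    ∃ D : GentleAlgebra k Q →ₗ[k] GentleAlgebra k Q ⧸ arrowsModule k Q {b | Q.Forbidden a b},
      (∀ b, D (arrOf k Q b) =
        if b = a then Submodule.Quotient.mk (idemOf k Q (Q.tgt a)) else 0) ∧
      ∀ x y, D (x * y) = aug k Q (Q.src a) x • D y + op y • D x := by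
  refine exists_foxDerivative ?_ fun b hb => ?_
  · rw [← Submodule.Quotient.mk_smul, op_smul_eq_mul, (isIdempotentElem_idemOf _).eq]
  · rw [← Submodule.Quotient.mk_smul, op_smul_eq_mul, Submodule.Quotient.mk_eq_zero]
    obtain hab | hab := eq_or_ne (Q.tgt a) (Q.src b)
    · rw [hab, idemOf_mul_arrOf]
      exact arrOf_mem_arrowsModule ⟨hab, hb⟩
    · rw [idemOf_mul_arrOf_of_ne hab.symm]
      exact zero_mem _

/-- The left Fox derivative with respect to an arrow `a`, with values modulo the right ideal
generated by the arrows `b` with `ab ∈ I`: it sends a path `ax` to `x` and every other path to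
zero. -/
noncomputable def foxDerivative (k : Type) [Field k] {Q : GentleData} (a : Q.A) :
    GentleAlgebra k Q →ₗ[k] GentleAlgebra k Q ⧸ arrowsModule k Q {b | Q.Forbidden a b} :=
  (exists_foxDerivative_quotient k a).choose

theorem foxDerivative_arrOf (a b : Q.A) : foxDerivative k a (arrOf k Q b) =
    if b = a then Submodule.Quotient.mk (idemOf k Q (Q.tgt a)) else 0 :=
  (exists_foxDerivative_quotient k a).choose_spec.1 b

theorem foxDerivative_mul (a : Q.A) (x y : GentleAlgebra k Q) : foxDerivative k a (x * y) =
    aug k Q (Q.src a) x • foxDerivative k a y + op y • foxDerivative k a x :=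
  (exists_foxDerivative_quotient k a).choose_spec.2 x y

theorem foxDerivative_arrOf_mul_self (a : Q.A) (y : GentleAlgebra k Q) :
    foxDerivative k a (arrOf k Q a * y) =
      Submodule.Quotient.mk (idemOf k Q (Q.tgt a) * y) := by
  rw [foxDerivative_mul, aug_arrOf, zero_smul, zero_add, foxDerivative_arrOf, if_pos rfl,
    ← Submodule.Quotient.mk_smul, op_smul_eq_mul]

theorem foxDerivative_eq_zero_of_mem_arrowsModule {a : Q.A} (ha : a ∉ s) {x : GentleAlgebra k Q}
    (hx : x ∈ arrowsModule k Q s) : foxDerivative k a x = 0 :=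
  arrowsModule_induction (motive := fun x => foxDerivative k a x = 0)
    (fun b hb y => by
      rw [foxDerivative_mul, aug_arrOf, zero_smul, foxDerivative_arrOf,
        if_neg (ne_of_mem_of_not_mem hb ha), smul_zero, add_zero])
    (map_zero _) (fun x y hx hy => by rw [map_add, hx, hy, add_zero]) hx

theorem vertexModule_inf_ker_arrOf (a : Q.A) :
    vertexModule k Q (Q.tgt a) ⊓ LinearMap.ker (spanSingletonCover (arrOf k Q a)) =
      arrowsModule k Q {b | Q.Forbidden a b} := by
  refine le_antisymm (fun x hx => ?_) (arrowsModule_le.2 fun b hb => ⟨?_, ?_⟩)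
  · have idemOf_mul : idemOf k Q (Q.tgt a) * x = x :=
      mul_eq_of_mem_span_op_singleton (isIdempotentElem_idemOf _) hx.1
    have arrOf_mul : arrOf k Q a * x = 0 := mem_ker_spanSingletonCover.1 hx.2
    rw [← Submodule.Quotient.mk_eq_zero, ← idemOf_mul, ← foxDerivative_arrOf_mul_self, arrOf_mul,
      map_zero]
  · rw [← idemOf_mul_arrOf, ← hb.1]
    exact mul_mem_span_op_singleton _ _
  · exact mem_ker_spanSingletonCover.2 (arrOf_mul_arrOf_of_rel hb.2)

theorem iSupIndep_arrowModule : iSupIndep (arrowModule k Q) := by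
  refine iSupIndep_def.2 fun a => Submodule.disjoint_def.2 fun x hxa hx => ?_
  obtain ⟨z, rfl⟩ := mem_span_op_singleton.1 hxa
  have derivative_eq_zero : foxDerivative k a (arrOf k Q a * z) = 0 :=
    foxDerivative_eq_zero_of_mem_arrowsModule (s := {b | b ≠ a}) (fun h => h rfl) hx
  have idemOf_mul_mem : idemOf k Q (Q.tgt a) * z ∈ arrowsModule k Q {b | Q.Forbidden a b} := by
    rwa [← Submodule.Quotient.mk_eq_zero, ← foxDerivative_arrOf_mul_self]
  rw [← vertexModule_inf_ker_arrOf] at idemOf_mul_mem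
  have := mem_ker_spanSingletonCover.1 idemOf_mul_mem.2
  rwa [op_smul_eq_mul, ← mul_assoc, arrOf_mul_idemOf] at this

theorem idemOf_mul_sub_aug_smul_mem (v : Q.V) (x : GentleAlgebra k Q) :
    idemOf k Q v * x - aug k Q v x • idemOf k Q v ∈ arrowsModule k Q {b | Q.src b = v} := by
  induction x using GentleAlgebra.induction_on with
  | algebraMap c => simp [Algebra.algebraMap_eq_smul_one]
  | idemOf w =>
    obtain rfl | h := eq_or_ne w v
    · simp [(isIdempotentElem_idemOf w).eq]
    · simp [h, completeOrthogonalIdempotents_idemOf.ortho h.symm]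
  | arrOf a =>
    rw [aug_arrOf, zero_smul, sub_zero]
    obtain rfl | h := eq_or_ne (Q.src a) v
    · rw [idemOf_mul_arrOf]
      exact arrOf_mem_arrowsModule rfl
    · rw [idemOf_mul_arrOf_of_ne h]
      exact zero_mem _
  | add x y hx hy =>
    rw [mul_add, map_add, add_smul, add_sub_add_comm]
    exact add_mem hx hy
  | mul x y hx hy =>
    have split : idemOf k Q v * (x * y) - aug k Q v (x * y) • idemOf k Q v =
        op y • (idemOf k Q v * x - aug k Q v x • idemOf k Q v) +
          aug k Q v x • (idemOf k Q v * y - aug k Q v y • idemOf k Q v) := by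
      rw [op_smul_eq_mul, sub_mul, mul_assoc, smul_mul_assoc, smul_sub, smul_smul, map_mul,
        sub_add_sub_cancel]
    rw [split]
    exact add_mem (Submodule.smul_mem _ _ hx) (Submodule.smul_of_tower_mem _ _ hy)

theorem vertexModule_inf_le_arrowsModule {v : Q.V}
    {I : Submodule (GentleAlgebra k Q)ᵐᵒᵖ (GentleAlgebra k Q)}
    (hI : arrowsModule k Q {b | Q.src b = v} ≤ I) (hv : idemOf k Q v ∉ I) :
    vertexModule k Q v ⊓ I ≤ arrowsModule k Q {b | Q.src b = v} := by
  rintro x ⟨hxv, hxI⟩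
  have mem := idemOf_mul_sub_aug_smul_mem v x
  rw [mul_eq_of_mem_span_op_singleton (isIdempotentElem_idemOf v) hxv] at mem
  have smul_mem : aug k Q v x • idemOf k Q v ∈ I := (Submodule.sub_mem_iff_right I hxI).1 (hI mem)
  have aug_eq_zero : aug k Q v x = 0 := by
    by_contra h
    refine hv ?_
    rw [← inv_smul_smul₀ h (idemOf k Q v)]
    exact Submodule.smul_of_tower_mem _ _ smul_mem
  rwa [aug_eq_zero, zero_smul, sub_zero] at mem

end ArrowIdeals

section Cycles

theorem exists_zmod_cycle_of_not_wellFounded {α : Type*} [Finite α] {r : α → α → Prop}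
    (h : ¬ WellFounded fun b a => r a b) :
    ∃ ℓ : ℕ, 1 ≤ ℓ ∧ ∃ c : ZMod ℓ → α, ∀ i, r (c i) (c (i + 1)) := by
  rw [wellFounded_iff_isEmpty_descending_chain, not_isEmpty_iff] at h
  obtain ⟨p, hp⟩ := h
  obtain ⟨i, j, hij, hpij⟩ : ∃ i j, i < j ∧ p i = p j := by
    obtain ⟨i, j, hne, heq⟩ := Finite.exists_ne_map_eq_of_infinite p
    exact hne.lt_or_gt.elim (fun h => ⟨i, j, h, heq⟩) fun h => ⟨j, i, h, heq.symm⟩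
  obtain ⟨n, rfl⟩ := Nat.exists_eq_add_of_lt hij
  refine ⟨n + 1, n.succ_pos, fun z : Fin (n + 1) => p (i + z), fun z : Fin (n + 1) => ?_⟩
  change r (p (i + z)) (p (i + (z + 1 : Fin (n + 1))))
  obtain rfl | hz := eq_or_ne z (Fin.last n)
  · rw [Fin.last_add_one, Fin.val_zero, Fin.val_last, add_zero, hpij]
    exact hp _
  · rw [Fin.val_add_one_of_lt (Fin.lt_last_iff_ne_last.2 hz)]
    exact hp _

end Cycles

section ArrowIdealDimension

open CategoryTheory

variable {k : Type} [Field k] {Q : GentleData}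

theorem hasProjectiveDimensionLE_arrowsModule_iff {s : Set Q.A} {n : ℕ} :
    HasProjectiveDimensionLE (ModuleCat.of (GentleAlgebra k Q)ᵐᵒᵖ (arrowsModule k Q s)) n ↔
      ∀ b ∈ s,
        HasProjectiveDimensionLE (ModuleCat.of (GentleAlgebra k Q)ᵐᵒᵖ (arrowModule k Q b)) n :=
  hasProjectiveDimensionLE_biSup_iff iSupIndep_arrowModule s.toFinite

theorem hasProjectiveDimensionLE_succ_arrowModule_iff {a : Q.A} {n : ℕ} :
    HasProjectiveDimensionLE
        (ModuleCat.of (GentleAlgebra k Q)ᵐᵒᵖ (arrowModule k Q a)) (n + 1) ↔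
      ∀ b, Q.Forbidden a b →
        HasProjectiveDimensionLE (ModuleCat.of (GentleAlgebra k Q)ᵐᵒᵖ (arrowModule k Q b)) n := by
  refine (hasProjectiveDimensionLE_succ_span_singleton_iff (isIdempotentElem_idemOf (Q.tgt a))
    (arrOf_mul_idemOf a)).trans ?_
  rw [← vertexModule, vertexModule_inf_ker_arrOf]
  exact hasProjectiveDimensionLE_arrowsModule_iff

-- Projectivity of `aA` provides `y` with `ay = a` and `yb = 0`: the former forces the coefficient
-- of `y` at the target of `a` to be `1`, and the Fox derivative of the latter forces it to be `0`.
theorem not_forbidden_of_projective_arrowModule {a : Q.A}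
    (ha : Module.Projective (GentleAlgebra k Q)ᵐᵒᵖ (arrowModule k Q a)) (b : Q.A) :
    ¬ Q.Forbidden a b := by
  intro hab
  obtain ⟨y, hy : arrOf k Q a * y = arrOf k Q a, hker⟩ :=
    exists_mul_eq_zero_of_projective_span_singleton ha
  have mul_eq_zero : y * arrOf k Q b = 0 := hker _ (arrOf_mul_arrOf_of_rel hab.2)
  have aug_eq_one : aug k Q (Q.tgt a) y = 1 := by
    have mem : idemOf k Q (Q.tgt a) * (1 - y) ∈ arrowsModule k Q {b | Q.Forbidden a b} := by
      rw [← Submodule.Quotient.mk_eq_zero, ← foxDerivative_arrOf_mul_self, mul_sub, mul_one, hy,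
        sub_self, map_zero]
    have := aug_eq_zero_of_mem_arrowsModule (Q.tgt a) mem
    simpa [sub_eq_zero, eq_comm (a := (1 : k))] using this
  have aug_eq_zero : aug k Q (Q.tgt a) y = 0 := by
    obtain ⟨z, hz⟩ := Submodule.Quotient.mk_surjective _ (foxDerivative k b y)
    have derivative := foxDerivative_mul (k := k) b y (arrOf k Q b)
    rw [mul_eq_zero, map_zero, foxDerivative_arrOf, if_pos rfl,
      ← hz, ← Submodule.Quotient.mk_smul, ← Submodule.Quotient.mk_smul, ← Submodule.Quotient.mk_add,
      eq_comm, Submodule.Quotient.mk_eq_zero, op_smul_eq_mul] at derivative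
    have := aug_eq_zero_of_mem_arrowsModule (Q.tgt b) derivative
    simpa [hab.1] using this
  exact one_ne_zero (aug_eq_one.symm.trans aug_eq_zero)

theorem IsOCFCycle.not_hasProjectiveDimensionLE_arrowModule {ℓ : ℕ} {c : ZMod ℓ → Q.A}
    (hc : IsOCFCycle Q c) (n : ℕ) (i : ZMod ℓ) :
    ¬ HasProjectiveDimensionLE
      (ModuleCat.of (GentleAlgebra k Q)ᵐᵒᵖ (arrowModule k Q (c i))) n := by
  induction n generalizing i with
  | zero =>
    exact fun h => not_forbidden_of_projective_arrowModule
      (hasProjectiveDimensionLE_zero_iff.1 h) _ (hc i)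
  | succ n ih =>
    exact fun h => ih (i + 1) (hasProjectiveDimensionLE_succ_arrowModule_iff.1 h _ (hc i))

theorem exists_forall_hasProjectiveDimensionLE_arrowModule (k : Type) [Field k]
    (hQ : WellFounded fun b a => Q.Forbidden a b) :
    ∃ n, ∀ a : Q.A,
      HasProjectiveDimensionLE (ModuleCat.of (GentleAlgebra k Q)ᵐᵒᵖ (arrowModule k Q a)) n := by
  suffices ∀ a : Q.A, ∀ᶠ n in Filter.atTop, HasProjectiveDimensionLE
      (ModuleCat.of (GentleAlgebra k Q)ᵐᵒᵖ (arrowModule k Q a)) n from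
    (Filter.eventually_all.2 this).exists
  intro a
  induction a using hQ.induction with
  | h a ih =>
    rw [← Filter.map_add_atTop_eq_nat 1, Filter.eventually_map]
    simpa only [hasProjectiveDimensionLE_succ_arrowModule_iff, Filter.eventually_all,
      Filter.eventually_imp_distrib_left] using ih

end ArrowIdealDimension

section PermittedPaths

variable {Q : GentleData}

section Finiteness

variable {k : Type} [Field k]

theorem arrowsModule_restrictScalars_fg {s : Set Q.A}
    (hs : ∀ b ∈ s, ((arrowModule k Q b).restrictScalars k).FG) :
    ((arrowsModule k Q s).restrictScalars k).FG := by
  rw [arrowsModule, iSup_subtype', Submodule.restrictScalars_iSup]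
  exact Submodule.fg_iSup _ fun b => hs b b.2

theorem arrowModule_restrictScalars_le (a : Q.A) :
    (arrowModule k Q a).restrictScalars k ≤ Submodule.span k {arrOf k Q a} ⊔
      ((arrowsModule k Q {b | Q.Permitted a b}).restrictScalars k).map
        (LinearMap.mulLeft k (arrOf k Q a)) := by
  have arrOf_mul_mem : ∀ x ∈ arrowsModule k Q {b | Q.src b = Q.tgt a}, arrOf k Q a * x ∈
      ((arrowsModule k Q {b | Q.Permitted a b}).restrictScalars k).map
        (LinearMap.mulLeft k (arrOf k Q a)) := by
    refine fun x => arrowsModule_induction (motive := fun x => arrOf k Q a * x ∈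
      ((arrowsModule k Q {b | Q.Permitted a b}).restrictScalars k).map
        (LinearMap.mulLeft k (arrOf k Q a))) (fun b hb y => ?_) (by simp) fun x y hx hy => ?_
    · by_cases hab : Q.rel a b
      · simp [← mul_assoc, arrOf_mul_arrOf_of_rel hab]
      · exact Submodule.mem_map_of_mem
          (arrOf_mul_mem_arrowsModule (s := {b | Q.Permitted a b}) ⟨hb.symm, hab⟩ y)
    · rw [mul_add]
      exact add_mem hx hy
  intro x hx
  obtain ⟨z, rfl⟩ := mem_span_op_singleton.1 hx
  have split : arrOf k Q a * z = aug k Q (Q.tgt a) z • arrOf k Q a + arrOf k Q a *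
      (idemOf k Q (Q.tgt a) * z - aug k Q (Q.tgt a) z • idemOf k Q (Q.tgt a)) := by
    rw [mul_sub, ← mul_assoc, mul_smul_comm, arrOf_mul_idemOf, add_sub_cancel]
  rw [split]
  exact Submodule.add_mem_sup
    (Submodule.smul_mem _ _ (Submodule.mem_span_singleton_self _))
    (arrOf_mul_mem _ (idemOf_mul_sub_aug_smul_mem _ z))

theorem arrowModule_restrictScalars_fg (hQ : WellFounded fun b a => Q.Permitted a b) (a : Q.A) :
    ((arrowModule k Q a).restrictScalars k).FG := by
  induction a using hQ.induction with
  | h a ih =>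
    refine .of_le ?_ (arrowModule_restrictScalars_le a)
    exact (Submodule.fg_span_singleton _).sup ((arrowsModule_restrictScalars_fg ih).map _)

theorem span_idemOf_sup_arrowsModule_univ :
    Submodule.span k (Set.range (idemOf k Q)) ⊔
      (arrowsModule k Q Set.univ).restrictScalars k = ⊤ := by
  refine eq_top_iff.2 fun z _ => ?_
  rw [← one_mul z, ← completeOrthogonalIdempotents_idemOf.complete, Finset.sum_mul]
  refine sum_mem fun v _ => ?_
  rw [← add_sub_cancel (aug k Q v z • idemOf k Q v) (idemOf k Q v * z)]
  refine Submodule.add_mem_sup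
    (Submodule.smul_mem _ _ (Submodule.subset_span (Set.mem_range_self v))) ?_
  exact (arrowsModule_le.2 fun b _ => arrOf_mem_arrowsModule (Set.mem_univ b) :
    arrowsModule k Q {b | Q.src b = v} ≤ arrowsModule k Q Set.univ)
      (idemOf_mul_sub_aug_smul_mem v z)

theorem finite_gentleAlgebra_of_wellFounded (hQ : WellFounded fun b a => Q.Permitted a b) :
    Module.Finite k (GentleAlgebra k Q) := by
  refine ⟨?_⟩
  rw [← span_idemOf_sup_arrowsModule_univ]
  exact (Submodule.fg_span (Set.finite_range _)).sup
    (arrowsModule_restrictScalars_fg fun b _ => arrowModule_restrictScalars_fg hQ b)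

end Finiteness

section Socle

variable {k : Type} [Field k] {M : Type*} [AddCommGroup M] [Module (GentleAlgebra k Q)ᵐᵒᵖ M]

theorem exists_smul_idemOf_ne_zero {m : M} (hm : m ≠ 0) : ∃ v, op (idemOf k Q v) • m ≠ 0 := by
  by_contra! h
  refine hm ?_
  rw [← one_smul (GentleAlgebra k Q)ᵐᵒᵖ m, ← op_one,
    ← completeOrthogonalIdempotents_idemOf.complete, Finset.op_sum, Finset.sum_smul]
  exact Finset.sum_eq_zero fun v _ => h v

theorem exists_smul_arrOf_eq_zero [Nontrivial M]
    (hQ : WellFounded fun b a => Q.Permitted a b) :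
    ∃ (v : Q.V) (m : M), m ≠ 0 ∧ op (idemOf k Q v) • m = m ∧ ∀ a, op (arrOf k Q a) • m = 0 := by
  have of_smul_ne_zero : ∀ (a : Q.A) (m : M), op (arrOf k Q a) • m ≠ 0 →
      ∃ (v : Q.V) (m : M), m ≠ 0 ∧ op (idemOf k Q v) • m = m ∧
        ∀ a, op (arrOf k Q a) • m = 0 := by
    intro a
    induction a using hQ.induction with
    | h a ih =>
      intro m hm
      by_contra! h
      obtain ⟨b, hb⟩ := h (Q.tgt a) _ hm (by rw [smul_smul, ← op_mul, arrOf_mul_idemOf])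
      have mul_ne_zero : arrOf k Q a * arrOf k Q b ≠ 0 := fun hab => hb <| by
        rw [smul_smul, ← op_mul, hab, op_zero, zero_smul]
      have permitted : Q.Permitted a b :=
        ⟨not_imp_comm.1 arrOf_mul_arrOf_of_ne mul_ne_zero,
          fun hab => mul_ne_zero (arrOf_mul_arrOf_of_rel hab)⟩
      obtain ⟨v, n, hn, hvn, hn0⟩ := ih b permitted _ hb
      exact (h v n hn hvn).elim fun c hc => hc (hn0 c)
  obtain ⟨m, hm⟩ := exists_ne (0 : M)
  obtain ⟨v, hv⟩ := exists_smul_idemOf_ne_zero (k := k) (Q := Q) hm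
  by_cases h : ∀ a, op (arrOf k Q a) • op (idemOf k Q v) • m = 0
  · exact ⟨v, _, hv, by rw [smul_smul, ← op_mul, (isIdempotentElem_idemOf v).eq], h⟩
  · obtain ⟨a, ha⟩ := not_forall.1 h
    exact of_smul_ne_zero a _ ha

theorem vertexModule_inf_ker_of_smul_arrOf_eq_zero {v : Q.V} {m : M} (hm : m ≠ 0)
    (hv : op (idemOf k Q v) • m = m) (ha : ∀ a, op (arrOf k Q a) • m = 0) :
    vertexModule k Q v ⊓ LinearMap.ker (spanSingletonCover m) =
      arrowsModule k Q {b | Q.src b = v} := by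
  have le_ker : arrowsModule k Q {b | Q.src b = v} ≤ LinearMap.ker (spanSingletonCover m) :=
    arrowsModule_le.2 fun b _ => mem_ker_spanSingletonCover.2 (ha b)
  refine le_antisymm (vertexModule_inf_le_arrowsModule le_ker fun h => hm ?_)
    (le_inf (arrowsModule_le.2 ?_) le_ker)
  · rw [← hv]
    exact mem_ker_spanSingletonCover.1 h
  · rintro b rfl
    rw [← idemOf_mul_arrOf]
    exact mul_mem_span_op_singleton _ _

end Socle

end PermittedPaths

section GlobalDimension

open CategoryTheory

variable {k : Type} [Field k] {Q : GentleData}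

theorem hasProjectiveDimensionLE_succ_of_isSimpleModule
    (hQ : WellFounded fun b a => Q.Permitted a b) {n : ℕ}
    (harr : ∀ a : Q.A,
      HasProjectiveDimensionLE (ModuleCat.of (GentleAlgebra k Q)ᵐᵒᵖ (arrowModule k Q a)) n)
    {S : Type} [AddCommGroup S] [Module (GentleAlgebra k Q)ᵐᵒᵖ S]
    [IsSimpleModule (GentleAlgebra k Q)ᵐᵒᵖ S] :
    HasProjectiveDimensionLE (ModuleCat.of (GentleAlgebra k Q)ᵐᵒᵖ S) (n + 1) := by
  have := IsSimpleModule.nontrivial (GentleAlgebra k Q)ᵐᵒᵖ S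
  obtain ⟨v, m, hm, hv, ha⟩ := exists_smul_arrOf_eq_zero (k := k) (M := S) hQ
  have span_eq_top := IsSimpleModule.span_singleton_eq_top (GentleAlgebra k Q)ᵐᵒᵖ hm
  rw [← hasProjectiveDimensionLE_congr (LinearEquiv.ofTop _ span_eq_top),
    hasProjectiveDimensionLE_succ_span_singleton_iff (isIdempotentElem_idemOf v) hv,
    ← vertexModule, vertexModule_inf_ker_of_smul_arrOf_eq_zero hm hv ha,
    hasProjectiveDimensionLE_arrowsModule_iff]
  exact fun b _ => harr b

theorem hasProjectiveDimensionLE_succ_of_finite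
    (hQ : WellFounded fun b a => Q.Permitted a b) {n : ℕ}
    (harr : ∀ a : Q.A,
      HasProjectiveDimensionLE (ModuleCat.of (GentleAlgebra k Q)ᵐᵒᵖ (arrowModule k Q a)) n)
    {M : Type} [AddCommGroup M] [Module (GentleAlgebra k Q)ᵐᵒᵖ M]
    [Module.Finite (GentleAlgebra k Q)ᵐᵒᵖ M] :
    HasProjectiveDimensionLE (ModuleCat.of (GentleAlgebra k Q)ᵐᵒᵖ M) (n + 1) := by
  have := finite_gentleAlgebra_of_wellFounded (k := k) hQ
  have : IsArtinianRing (GentleAlgebra k Q)ᵐᵒᵖ := .of_finite k _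
  exact hasProjectiveDimensionLE_of_isFiniteLength
    (fun S => hasProjectiveDimensionLE_succ_of_isSimpleModule hQ harr)
    (isFiniteLength_iff_isNoetherian_isArtinian.2 ⟨inferInstance, inferInstance⟩)

end GlobalDimension

theorem globalDim_eq_top_iff_exists_ocf_cycle_general (k : Type) [Field k] (Q : GentleData)
    (hQ : WellFounded fun b a => Q.Permitted a b) :
    globalDim (GentleAlgebra k Q)ᵐᵒᵖ = ⊤ ↔
      ∃ ℓ : ℕ, 1 ≤ ℓ ∧ ∃ c : ZMod ℓ → Q.A, IsOCFCycle Q c := by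
  rw [globalDim_eq_top_iff]
  constructor
  · intro h
    refine exists_zmod_cycle_of_not_wellFounded (r := Q.Forbidden) fun hwf => ?_
    obtain ⟨n, hn⟩ := exists_forall_hasProjectiveDimensionLE_arrowModule k hwf
    obtain ⟨M, _, hM⟩ := h (n + 1)
    exact hM (hasProjectiveDimensionLE_succ_of_finite hQ hn)
  · rintro ⟨ℓ, -, c, hc⟩ n
    exact ⟨ModuleCat.of _ (arrowModule k Q (c 0)), .span_of_finite _ (Set.finite_singleton _),
      hc.not_hasProjectiveDimensionLE_arrowModule n 0⟩

theorem IsGentle.wellFounded_permitted {Q : GentleData} (hQ : IsGentle Q) :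
    WellFounded fun b a => Q.Permitted a b := by
  obtain ⟨_, _, _, _, _, _, _, N, hN⟩ := hQ
  exact wellFounded_iff_isEmpty_descending_chain.2 ⟨fun ⟨p, hp⟩ => hN p fun i _ => hp i⟩

/-- Let `A = kQ/I` be a gentle algebra. Then the global
dimension of `A` is infinite if and only if the bound quiver `(Q, I)` contains
at least one oriented cycle with full relations. -/
theorem globalDim_eq_top_iff_exists_ocf_cycle
    (k : Type) [Field k] [IsAlgClosed k] (Q : GentleData) (hQ : IsGentle Q) :
    globalDim (GentleAlgebra k Q)ᵐᵒᵖ = ⊤ ↔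
      ∃ ℓ : ℕ, 1 ≤ ℓ ∧ ∃ c : ZMod ℓ → Q.A, IsOCFCycle Q c :=
  globalDim_eq_top_iff_exists_ocf_cycle_general k Q hQ.wellFounded_permitted
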